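/- Basic inequality: let (x_i)_{i∈I} be a (C,(j_i)_{i∈I})-rapidly increasing sequence, let (a_i)_{i∈I} be scalars, let i_0 = min I, and let N ∈ ℕ with N < min{m_{j_{i_0}}, min supp x_{i_0}}. Then for every f ∈ W_iw there exist h ∈ {±e_n^* : n ∈ ℕ} ∪ {0} and g ∈ W_aux^N, both supported in {t_i : i ∈ I} where t_i = max supp x_i, such that |f(Σ_{i∈I} a_i x_i)| ≤ C·(1 + 1/√(m_{j_{i_0}}))·|(h+g)(Σ_{i∈I} a_i e_{t_i})|. -/

import Mathlib

/-!
The basic inequality is proved by induction on the construction of `f ∈ W_iw`, for all nonempty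
subsets `J` of the index set simultaneously. The induction hypothesis (`BasicIneq`) also asks that
`h` and `g` be nonnegative on `∑ a_i e_{t_i}` and that the support of `h` precede that of `g`.

If `f = ±e_k^*`, it acts on at most one `x_i`, and `g = ±e_{t_i}^*`, `h = 0` work. Let
`f = W⁻¹ ∑ f_q` have weight `W`, and split `J` according to whether `m_{j_i} ≤ W` or not.

* Indices with `m_{j_i} ≤ W` (`HeredRIS.low_part`): all the vectors but the last are supported
  below `√W`, while the coefficients of `f` are at most `1 / W`, so they contribute at most
  `C / √W · max |a_i|`; the last vector contributes at most `C · max |a_i|`. The functional `h` is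
  `±e_{t_i}^*` for an index `i` maximizing `|a_i|`.
* Indices with `m_{j_i} > W` (`HeredRIS.high_part`): those whose vector meets exactly one `f_q` are
  covered by the induction hypothesis for `f_q`, which gives `h_q` and `g_q`. For each `q` at most
  one vector meets `f_q` first and a later `f_r` too; there the definition of a rapidly increasing
  sequence gives `|f(x_i)| ≤ C / W`, and `±e_{t_i}^*` is used. Every `f_q` is thus replaced by at
  most three successive functionals located after `min supp f_q`. As the Schreier families are
  spreading and hereditary (`schreier_spread`), the resulting sequence is `S_n * A_3`-admissible
  (`WAux.op_triples`), and `g` is `W⁻¹` times its sum.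

The sequence is `N`-sufficiently large: if something nonzero precedes `g_q` and comes from an
earlier `f_p`, then `f_p` meets some `x_i`, so `w(f_q) > max supp f_p ≥ min supp x_i > N`; and if
`h_q ≠ 0` then `w(f_q) ≥ m_{j_i} > N` for some `i`.
-/

open Filter Topology
open scoped ENNReal

noncomputable section

/-! ### Abstract Banach space notions -/

section Abstract

variable {X : Type*} [NormedAddCommGroup X] [NormedSpace ℝ X]

/-- A sequence is normalized if every term has norm one. -/
def Normalized (x : ℕ → X) : Prop := ∀ i, ‖x i‖ = 1

/-- A sequence is weakly null if it tends to `0` in the weak topology. -/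
def WeaklyNull (x : ℕ → X) : Prop :=
  ∀ f : X →L[ℝ] ℝ, Tendsto (fun i => f (x i)) atTop (𝓝 (0 : ℝ))

end Abstract

/-- The ℓ₁ norm of finite coefficient vectors (the norms of finite linear
combinations of the unit vector basis of ℓ₁). -/
def l1Norm : ∀ m : ℕ, (Fin m → ℝ) → ℝ := fun _ a => ∑ i, |a i|

/-- The sup norm of finite coefficient vectors (the norms of finite linear
combinations of the unit vector basis of c₀). -/
def supNorm : ∀ m : ℕ, (Fin m → ℝ) → ℝ := fun _ a => ⨆ i, |a i|

/-- The ℓ_p norm of finite coefficient vectors, `1 ≤ p < ∞`. -/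
def lpNormFin (p : ℝ) : ∀ m : ℕ, (Fin m → ℝ) → ℝ := fun _ a => (∑ i, |a i| ^ p) ^ (1 / p)

/-- The ℓ_q norms of finite coefficient vectors, `q ∈ [1,∞]`, where `q = ∞`
corresponds to `c₀`. -/
def finLqNorm (q : ℝ≥0∞) : ∀ m : ℕ, (Fin m → ℝ) → ℝ := fun m a =>
  if q = ⊤ then supNorm m a else lpNormFin q.toReal m a

/-- The family of seminorms `ν` (of finite combinations of a sequence in a seminormed
space) is `C`-equivalent to the family `μ`:  there are `A B > 0` with `A * B ≤ C` and
`(1/A) * μ ≤ ν ≤ B * μ`. -/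
def NormFamEquiv (C : ℝ) (μ ν : ∀ m : ℕ, (Fin m → ℝ) → ℝ) : Prop :=
  ∃ A B : ℝ, 0 < A ∧ 0 < B ∧ A * B ≤ C ∧
    ∀ (m : ℕ) (a : Fin m → ℝ), (1 / A) * μ m a ≤ ν m a ∧ ν m a ≤ B * μ m a

section Abstract2

variable {X : Type*} [NormedAddCommGroup X] [NormedSpace ℝ X]

/-- The sequence `x` generates the spreading model whose finite-combination
seminorms are given by the family `ν`. -/
def GeneratesSpreadingModel (x : ℕ → X) (ν : ∀ m : ℕ, (Fin m → ℝ) → ℝ) : Prop :=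
  ∀ (m : ℕ) (a : Fin m → ℝ), ∀ ε > (0 : ℝ), ∃ N : ℕ, ∀ j : Fin m → ℕ,
    StrictMono j → (∀ i, N ≤ j i) → |‖∑ i, a i • x (j i)‖ - ν m a| < ε

/-- The array of sequences `A` (row `A i` is the `i`-th sequence) generates the
asymptotic model whose finite-combination seminorms are given by `ν`. -/
def GeneratesAsymptoticModel (A : ℕ → ℕ → X) (ν : ∀ l : ℕ, (Fin l → ℝ) → ℝ) : Prop :=
  ∀ (l : ℕ) (a : Fin l → ℝ), ∀ ε > (0 : ℝ), ∃ N : ℕ, ∀ j : Fin l → ℕ,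
    StrictMono j → (∀ i, N ≤ j i) → |‖∑ i, a i • A i (j i)‖ - ν l a| < ε

/-- `e` is a Schauder basis of `X`. -/
def IsSchauderBasis (e : ℕ → X) : Prop :=
  ∀ x : X, ∃! a : ℕ → ℝ,
    Tendsto (fun n => ∑ i ∈ Finset.range n, a i • e i) atTop (𝓝 x)

/-- The basis `e` is 1-unconditional. -/
def OneUnconditional (e : ℕ → X) : Prop :=
  ∀ (F : Finset ℕ) (a ε : ℕ → ℝ), (∀ i, ε i = 1 ∨ ε i = -1) →
    ‖∑ i ∈ F, (ε i * a i) • e i‖ = ‖∑ i ∈ F, a i • e i‖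

/-- `x` is a block sequence with respect to the basis `e`. -/
def IsBlockSeq (e : ℕ → X) (x : ℕ → X) : Prop :=
  ∃ F : ℕ → Finset ℕ, (∀ k, (F k).Nonempty) ∧
    (∀ k l : ℕ, k < l → ∀ i ∈ F k, ∀ j ∈ F l, i < j) ∧
    ∀ k, x k ≠ 0 ∧ x k ∈ Submodule.span ℝ (e '' ↑(F k))

/-- `z` is a finite block sequence with respect to the basis `e`. -/
def IsFinBlockSeq (e : ℕ → X) {n : ℕ} (z : Fin n → X) : Prop :=
  ∃ F : Fin n → Finset ℕ, (∀ k, (F k).Nonempty) ∧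
    (∀ k l : Fin n, k < l → ∀ i ∈ F k, ∀ j ∈ F l, i < j) ∧
    ∀ k, z k ≠ 0 ∧ z k ∈ Submodule.span ℝ (e '' ↑(F k))

/-- `Y` is a block subspace of `X` (with respect to the basis `e`): the closed
linear span of an infinite normalized block sequence. -/
def IsBlockSubspace (e : ℕ → X) (Y : Set X) : Prop :=
  ∃ y : ℕ → X, IsBlockSeq e y ∧ Normalized y ∧
    Y = closure (↑(Submodule.span ℝ (Set.range y)) : Set X)

/-- The finite sequence `z` is `C`-equivalent to a finite basic sequence whose
finite-combination norms are given by `μ`. -/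
def FinSeqEquiv (C : ℝ) {n : ℕ} (μ : (Fin n → ℝ) → ℝ) (z : Fin n → X) : Prop :=
  ∃ A B : ℝ, 0 < A ∧ 0 < B ∧ A * B ≤ C ∧
    ∀ a : Fin n → ℝ, (1 / A) * μ a ≤ ‖∑ i, a i • z i‖ ∧ ‖∑ i, a i • z i‖ ≤ B * μ a

/-- The finite basic sequence with combination norms `μ` is block representable
in `Y ⊆ X`. -/
def BlockRepresentableIn (e : ℕ → X) (Y : Set X) {n : ℕ} (μ : (Fin n → ℝ) → ℝ) : Prop :=
  ∀ ε > (0 : ℝ), ∃ z : Fin n → X, (∀ i, z i ∈ Y) ∧ IsFinBlockSeq e z ∧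
    FinSeqEquiv (1 + ε) μ z

/-- `x` is a (Schauder) basic sequence. -/
def IsBasicSeq (x : ℕ → X) : Prop :=
  (∀ i, x i ≠ 0) ∧ ∃ K : ℝ, 0 < K ∧ ∀ (a : ℕ → ℝ) (m n : ℕ), m ≤ n →
    ‖∑ i ∈ Finset.range m, a i • x i‖ ≤ K * ‖∑ i ∈ Finset.range n, a i • x i‖

end Abstract2

/-- A plegma of `k` strictly increasing `l`-tuples of naturals. -/
def IsPlegma (k l : ℕ) (s : Fin k → Fin l → ℕ) : Prop :=
  (∀ i, StrictMono (s i)) ∧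
  (∀ i₁ i₂ : Fin k, ∀ j₁ j₂ : Fin l, j₁ < j₂ → s i₁ j₁ < s i₂ j₂) ∧
  (∀ i₁ i₂ : Fin k, i₁ < i₂ → ∀ j, s i₁ j ≤ s i₂ j)

/-- A strict plegma: a plegma with pairwise disjoint tuples. -/
def IsStrictPlegma (k l : ℕ) (s : Fin k → Fin l → ℕ) : Prop :=
  IsPlegma k l s ∧ ∀ i₁ i₂ : Fin k, i₁ ≠ i₂ → ∀ j₁ j₂ : Fin l, s i₁ j₁ ≠ s i₂ j₂

section Abstract3

variable {X : Type*} [NormedAddCommGroup X] [NormedSpace ℝ X]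

/-- The `l`-array `x` generates the joint spreading model with finite-combination
seminorms `ν`. -/
def GeneratesJSM (l : ℕ) (x : Fin l → ℕ → X)
    (ν : ∀ k : ℕ, (Fin l → Fin k → ℝ) → ℝ) : Prop :=
  ∀ (k : ℕ) (a : Fin l → Fin k → ℝ), ∀ ε > (0 : ℝ), ∃ N : ℕ,
    ∀ s : Fin l → Fin k → ℕ, IsStrictPlegma l k s → (∀ i j, N ≤ s i j) →
      |‖∑ i, ∑ j, a i j • x i (s i j)‖ - ν k a| < ε

/-- `X` admits a unique joint spreading model with respect to the family of
sequences `F`. -/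
def UniqueJSM (F : Set (ℕ → X)) : Prop :=
  ∃ C : ℝ, 1 ≤ C ∧ ∀ (l : ℕ) (x y : Fin l → ℕ → X),
    (∀ i, x i ∈ F) → (∀ i, y i ∈ F) →
    ∀ ν μ, GeneratesJSM l x ν → GeneratesJSM l y μ →
      ∃ A B : ℝ, 0 < A ∧ 0 < B ∧ A * B ≤ C ∧
        ∀ (k : ℕ) (a : Fin l → Fin k → ℝ),
          (1 / A) * μ k a ≤ ν k a ∧ ν k a ≤ B * μ k a

/-- `X` admits a unique asymptotic model with respect to the family of
sequences `F`. -/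
def UniqueAM (F : Set (ℕ → X)) : Prop :=
  ∀ x y : ℕ → ℕ → X, (∀ i, x i ∈ F) → (∀ i, y i ∈ F) →
    ∀ ν μ, GeneratesAsymptoticModel x ν → GeneratesAsymptoticModel y μ →
      ∃ C : ℝ, 1 ≤ C ∧ NormFamEquiv C μ ν

end Abstract3

/-- A bundled Banach-space candidate. -/
structure BanachPkg : Type 1 where
  X : Type
  [grp : NormedAddCommGroup X]
  [mod : NormedSpace ℝ X]

attribute [instance] BanachPkg.grp BanachPkg.mod

/-! ### c₀₀ and the norming sets -/

/-- The finitely supported real sequences. -/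
abbrev c00 : Type := ℕ →₀ ℝ

/-- Minimum of the support (0 for the zero vector). -/
def minSupp (x : c00) : ℕ := if h : x.support.Nonempty then x.support.min' h else 0

/-- Maximum of the support (0 for the zero vector). -/
def maxSupp (x : c00) : ℕ := if h : x.support.Nonempty then x.support.max' h else 0

/-- Minimum of a finset of naturals (0 if empty). -/
def finsetMin (F : Finset ℕ) : ℕ := if h : F.Nonempty then F.min' h else 0

/-- `x < y` as successive (block) vectors. -/
def Blocks (x y : c00) : Prop := maxSupp x < minSupp y

/-- The Schreier families. -/
def Schreier : ℕ → Set (Finset ℕ)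
  | 0 => {F | ∃ i : ℕ, F = {i}}
  | n + 1 => {F | ∃ (d : ℕ) (G : Fin d → Finset ℕ),
      (∀ k, G k ∈ Schreier n) ∧
      (∀ k l : Fin d, k < l → ∀ i ∈ G k, ∀ j ∈ G l, i < j) ∧
      (∀ i ∈ F, d ≤ i) ∧ F = Finset.univ.biUnion G}

/-- The family `A_m` of sets of cardinality at most `m`. -/
def SchreierA (m : ℕ) : Set (Finset ℕ) := {F | F.card ≤ m}

/-- The operation `A * B` on families of finite sets. -/
def famStar (A B : Set (Finset ℕ)) : Set (Finset ℕ) :=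
  {F | ∃ (d : ℕ) (G : Fin d → Finset ℕ),
      (∀ k, G k ∈ B) ∧ (∀ k, (G k).Nonempty) ∧
      (∀ k l : Fin d, k < l → ∀ i ∈ G k, ∀ j ∈ G l, i < j) ∧
      (Finset.univ.image fun k => finsetMin (G k)) ∈ A ∧ F = Finset.univ.biUnion G}

/-- A finite block sequence in `c00` is `S`-admissible. -/
def Admissible (S : Set (Finset ℕ)) {d : ℕ} (f : Fin d → c00) : Prop :=
  (∀ q, (f q).support.Nonempty) ∧
  (∀ q r : Fin d, q < r → Blocks (f q) (f r)) ∧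
  (Finset.univ.image fun q => minSupp (f q)) ∈ S

/-- The two fixed sequences `(m_j)`, `(n_j)` (indexed here starting at `0`, so that
`m 0` plays the role of `m_1` etc.) together with their growth conditions. -/
structure IWParams where
  m : ℕ → ℕ
  n : ℕ → ℕ
  m_mono : StrictMono m
  n_mono : StrictMono n
  m_first : m 0 = 2
  n_first : n 0 = 1
  growth_exp : ∀ C : ℝ, 1 < C → Tendsto (fun j => C ^ (n j) / (m j : ℝ)) atTop atTop
  growth_ratio : Tendsto (fun j => (m j : ℝ) / (m (j + 1) : ℝ)) atTop (𝓝 0)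
  growth_sum : ∀ (l : ℕ) (js : Fin l → ℕ) (j : ℕ), (∀ i, js i ≤ j) →
    (∏ i, m (js i)) < m (j + 1) ^ 2 → (∑ i, n (js i)) + 1 < n (j + 1)

/-- The action of a functional `f ∈ c00` on a vector `x ∈ c00`. -/
def evalPair (f x : c00) : ℝ := f.sum fun i a => a * x i

/-- The norming set `W_iw`, together with admissible weights: `WIW P f w` means
that `f` belongs to the norming set and `w` is a weight of (one representation of)
`f`; the unit functionals `±e_i^*` have weight `∞`. -/
inductive WIW (P : IWParams) : c00 → ℕ∞ → Prop
  | unit (i : ℕ) (s : ℝ) (hs : s = 1 ∨ s = -1) : WIW P (Finsupp.single i s) ⊤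
  | op (l : ℕ) (hl : 0 < l) (js : Fin l → ℕ) (d : ℕ) (f : Fin d → c00) (w : Fin d → ℕ∞)
      (hf : ∀ q, WIW P (f q) (w q))
      (hadm : Admissible (Schreier (∑ i, P.n (js i))) f)
      (hvfg : ∀ q r : Fin d, (q : ℕ) + 1 = (r : ℕ) → (maxSupp (f q) : ℕ∞) < w r) :
      WIW P (((∏ i, P.m (js i) : ℕ) : ℝ)⁻¹ • ∑ q, f q) ((∏ i, P.m (js i) : ℕ) : ℕ∞)

/-- Membership in the norming set `W_iw`. -/
def memWIW (P : IWParams) (f : c00) : Prop := ∃ w, WIW P f w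

/-- The norm of `X_iw`, on finitely supported vectors. -/
def iwNorm (P : IWParams) (x : c00) : ℝ :=
  sSup {r | ∃ f, memWIW P f ∧ r = evalPair f x}

/-- The dual norm of a finitely supported functional, as an element of `X_iw^*`. -/
def iwDualNorm (P : IWParams) (f : c00) : ℝ :=
  sSup {r | ∃ x : c00, iwNorm P x ≤ 1 ∧ r = evalPair f x}

/-- The auxiliary norming set `W_aux^N` together with admissible weights. -/
inductive WAux (P : IWParams) (N : ℕ) : c00 → ℕ∞ → Prop
  | unit (i : ℕ) (s : ℝ) (hs : s = 1 ∨ s = -1) : WAux P N (Finsupp.single i s) ⊤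
  | op (l : ℕ) (hl : 0 < l) (js : Fin l → ℕ) (d : ℕ) (f : Fin d → c00) (w : Fin d → ℕ∞)
      (hf : ∀ q, WAux P N (f q) (w q))
      (hadm : Admissible (famStar (Schreier (∑ i, P.n (js i))) (SchreierA 3)) f)
      (hlarge : ∀ q : Fin d, 0 < (q : ℕ) → (N : ℕ∞) < w q) :
      WAux P N (((∏ i, P.m (js i) : ℕ) : ℝ)⁻¹ • ∑ q, f q) ((∏ i, P.m (js i) : ℕ) : ℕ∞)

/-- An `(n, ε)` basic special convex combination. -/
def IsBasicSCC (n : ℕ) (ε : ℝ) (x : c00) : Prop :=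
  ∃ F : Finset ℕ, x.support ⊆ F ∧ F ∈ Schreier n ∧ (∀ i, 0 ≤ x i) ∧
    (∑ i ∈ F, x i) = 1 ∧ ∀ G ⊆ F, G ∈ Schreier (n - 1) → (∑ i ∈ G, x i) < ε

/-- An `(n, ε)` special convex combination `∑ c i • x i`. -/
def IsSCC (n : ℕ) (ε : ℝ) {m : ℕ} (c : Fin m → ℝ) (x : Fin m → c00) : Prop :=
  (∀ i, (x i).support.Nonempty) ∧
  (∀ i j : Fin m, i < j → Blocks (x i) (x j)) ∧
  IsBasicSCC n ε (∑ i, c i • Finsupp.single (minSupp (x i)) (1 : ℝ))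

/-- `x` generates, with respect to the norm function `Nrm` on `c00`, the spreading
model whose finite-combination seminorms are `ν`. -/
def GeneratesSMwith (Nrm : c00 → ℝ) (x : ℕ → c00) (ν : ∀ m : ℕ, (Fin m → ℝ) → ℝ) : Prop :=
  ∀ (m : ℕ) (a : Fin m → ℝ), ∀ ε > (0 : ℝ), ∃ N : ℕ, ∀ j : Fin m → ℕ,
    StrictMono j → (∀ i, N ≤ j i) → |Nrm (∑ i, a i • x (j i)) - ν m a| < ε

/-- The array `A` generates, with respect to the norm function `Nrm` on `c00`, the
asymptotic model whose finite-combination seminorms are `ν`. -/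
def GeneratesAMwith (Nrm : c00 → ℝ) (A : ℕ → ℕ → c00) (ν : ∀ l : ℕ, (Fin l → ℝ) → ℝ) : Prop :=
  ∀ (l : ℕ) (a : Fin l → ℝ), ∀ ε > (0 : ℝ), ∃ N : ℕ, ∀ j : Fin l → ℕ,
    StrictMono j → (∀ i, N ≤ j i) → |Nrm (∑ i, a i • A i (j i)) - ν l a| < ε

/-- A normalized block sequence in `c00` with respect to a norm function. -/
def IsNormBlockSeq (Nrm : c00 → ℝ) (y : ℕ → c00) : Prop :=
  (∀ k, (y k).support.Nonempty) ∧ (∀ k, Blocks (y k) (y (k + 1))) ∧ ∀ k, Nrm (y k) = 1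

/-- A `(C, (j_i)_{i ∈ I})` rapidly increasing sequence, `I` a (finite) interval. -/
def IsRIS (P : IWParams) (C : ℝ) (I : Finset ℕ) (j : ℕ → ℕ) (x : ℕ → c00) : Prop :=
  (∀ a ∈ I, ∀ b ∈ I, ∀ c : ℕ, a ≤ c → c ≤ b → c ∈ I) ∧
  (∀ a ∈ I, ∀ b ∈ I, a < b → j a < j b) ∧
  (∀ i ∈ I, (x i).support.Nonempty) ∧
  (∀ a ∈ I, ∀ b ∈ I, a < b → Blocks (x a) (x b)) ∧
  (∀ i ∈ I, iwNorm P (x i) ≤ C) ∧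
  (∀ i ∈ I, ∀ i' ∈ I, i' + 1 = i → (maxSupp (x i') : ℝ) < Real.sqrt (P.m (j i))) ∧
  (∀ i ∈ I, ∀ f w, WIW P f w → w < ((P.m (j i) : ℕ) : ℕ∞) →
    |evalPair f (x i)| ≤ C / (w.toNat : ℝ))

/-- An infinite `(C, (j_i)_i)` rapidly increasing sequence. -/
def IsRISNat (P : IWParams) (C : ℝ) (j : ℕ → ℕ) (x : ℕ → c00) : Prop :=
  StrictMono j ∧ (∀ i, (x i).support.Nonempty) ∧ (∀ i, Blocks (x i) (x (i + 1))) ∧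
  (∀ i, iwNorm P (x i) ≤ C) ∧
  (∀ i, (maxSupp (x i) : ℝ) < Real.sqrt (P.m (j (i + 1)))) ∧
  (∀ i, ∀ f w, WIW P f w → w < ((P.m (j i) : ℕ) : ℕ∞) →
    |evalPair f (x i)| ≤ C / (w.toNat : ℝ))

/-- `X` together with the basis `e` is a realization of the space `X_iw`: a Banach
space in which `c00` sits isometrically (w.r.t. `iwNorm`) and densely. -/
structure IsIWRealization (P : IWParams) (X : Type*) [NormedAddCommGroup X]
    [NormedSpace ℝ X] (e : ℕ → X) : Prop where
  complete : CompleteSpace X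
  dense : DenseRange fun a : c00 => ∑ i ∈ a.support, a i • e i
  norm_eq : ∀ a : c00, ‖∑ i ∈ a.support, a i • e i‖ = iwNorm P a

/-- The conjugate exponent of `p`. -/
def conjExp (p : ℝ) : ℝ := p / (p - 1)

/-- The norming set `W_iw^p` together with admissible weights. -/
inductive WIWp (P : IWParams) (p : ℝ) : c00 → ℕ∞ → Prop
  | unit (i : ℕ) (s : ℝ) (hs : s = 1 ∨ s = -1) : WIWp P p (Finsupp.single i s) ⊤
  | op (l : ℕ) (hl : 0 < l) (js : Fin l → ℕ) (d : ℕ) (f : Fin d → c00) (w : Fin d → ℕ∞)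
      (lam : Fin d → ℝ) (hlam : (∑ q, |lam q| ^ conjExp p) ≤ 1)
      (hf : ∀ q, WIWp P p (f q) (w q))
      (hadm : Admissible (Schreier (∑ i, P.n (js i))) f)
      (hvfg : ∀ q r : Fin d, (q : ℕ) + 1 = (r : ℕ) → (maxSupp (f q) : ℕ∞) < w r) :
      WIWp P p (((∏ i, P.m (js i) : ℕ) : ℝ)⁻¹ • ∑ q, lam q • f q)
        ((∏ i, P.m (js i) : ℕ) : ℕ∞)

/-- The norm of `X_iw^p` on finitely supported vectors. -/
def iwpNorm (P : IWParams) (p : ℝ) (x : c00) : ℝ :=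
  sSup {r | ∃ f, (∃ w, WIWp P p f w) ∧ r = evalPair f x}

/-- The norming set of the space `X̃_iw`, together with admissible weights. -/
inductive WT (P : IWParams) : c00 → ℕ∞ → Prop
  | unit (i : ℕ) (s : ℝ) (hs : s = 1 ∨ s = -1) : WT P (Finsupp.single i s) ⊤
  | op (j : ℕ) (d : ℕ) (f : Fin d → c00) (w : Fin d → ℕ∞)
      (hf : ∀ q, WT P (f q) (w q))
      (hadm : Admissible (Schreier (P.n j)) f)
      (hvfg : ∀ q r : Fin d, (q : ℕ) + 1 = (r : ℕ) → (maxSupp (f q) : ℕ∞) < w r) :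
      WT P ((P.m j : ℝ)⁻¹ • ∑ q, f q) ((P.m j : ℕ) : ℕ∞)

/-- The norm of `X̃_iw` on finitely supported vectors. -/
def tNorm (P : IWParams) (x : c00) : ℝ :=
  sSup {r | ∃ f, (∃ w, WT P f w) ∧ r = evalPair f x}

end

/-! ### Supports and the duality pairing -/

lemma minSupp_le {x : c00} {k : ℕ} (hk : k ∈ x.support) : minSupp x ≤ k := by
  unfold minSupp
  rw [dif_pos ⟨k, hk⟩]
  exact Finset.min'_le _ _ hk

lemma le_maxSupp {x : c00} {k : ℕ} (hk : k ∈ x.support) : k ≤ maxSupp x := by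
  unfold maxSupp
  rw [dif_pos ⟨k, hk⟩]
  exact Finset.le_max' _ _ hk

lemma minSupp_mem {x : c00} (hx : x.support.Nonempty) : minSupp x ∈ x.support := by
  unfold minSupp
  rw [dif_pos hx]
  exact Finset.min'_mem _ _

lemma maxSupp_mem {x : c00} (hx : x.support.Nonempty) : maxSupp x ∈ x.support := by
  unfold maxSupp
  rw [dif_pos hx]
  exact Finset.max'_mem _ _

lemma finsetMin_mem {F : Finset ℕ} (hF : F.Nonempty) : finsetMin F ∈ F := by
  unfold finsetMin
  rw [dif_pos hF]
  exact Finset.min'_mem _ _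

lemma Blocks.lt {x y : c00} (h : Blocks x y) {k l : ℕ} (hk : k ∈ x.support)
    (hl : l ∈ y.support) : k < l :=
  (le_maxSupp hk).trans_lt (lt_of_lt_of_le h (minSupp_le hl))

lemma evalPair_eq_left {f x : c00} {S : Finset ℕ} (h : f.support ⊆ S) :
    evalPair f x = ∑ k ∈ S, f k * x k := by
  unfold evalPair Finsupp.sum
  refine Finset.sum_subset h fun k _ hk => ?_
  simp [Finsupp.notMem_support_iff.1 hk]

lemma evalPair_eq_right {f x : c00} {S : Finset ℕ} (h : x.support ⊆ S) :
    evalPair f x = ∑ k ∈ S, f k * x k := by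
  rw [evalPair_eq_left (Finset.subset_union_left (s₁ := f.support) (s₂ := S))]
  symm
  refine Finset.sum_subset Finset.subset_union_right fun k _ hk => ?_
  rw [Finsupp.notMem_support_iff.1 (fun hx => hk (h hx)), mul_zero]

lemma evalPair_add_left (f g x : c00) : evalPair (f + g) x = evalPair f x + evalPair g x := by
  simp only [evalPair_eq_right (Finset.Subset.refl x.support), Finsupp.add_apply, add_mul,
    Finset.sum_add_distrib]

lemma evalPair_smul_left (c : ℝ) (f x : c00) : evalPair (c • f) x = c * evalPair f x := by
  simp only [evalPair_eq_right (Finset.Subset.refl x.support), Finsupp.smul_apply, smul_eq_mul,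
    Finset.mul_sum, mul_assoc]

lemma evalPair_zero_left (x : c00) : evalPair 0 x = 0 := by
  simp [evalPair]

lemma evalPair_sum_left {ι : Type*} (s : Finset ι) (f : ι → c00) (x : c00) :
    evalPair (∑ i ∈ s, f i) x = ∑ i ∈ s, evalPair (f i) x := by
  classical
  induction s using Finset.induction_on with
  | empty => simp [evalPair_zero_left]
  | insert i s hi ih => rw [Finset.sum_insert hi, Finset.sum_insert hi, evalPair_add_left, ih]

lemma evalPair_sum_smul_right {ι : Type*} (s : Finset ι) (f : c00) (a : ι → ℝ) (x : ι → c00) :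
    evalPair f (∑ i ∈ s, a i • x i) = ∑ i ∈ s, a i * evalPair f (x i) := by
  simp only [evalPair_eq_left (Finset.Subset.refl f.support), Finsupp.finsetSum_apply,
    Finsupp.smul_apply, smul_eq_mul, Finset.mul_sum]
  rw [Finset.sum_comm]
  exact Finset.sum_congr rfl fun i _ => Finset.sum_congr rfl fun k _ => by ring

lemma evalPair_single_left (k : ℕ) (s : ℝ) (x : c00) :
    evalPair (Finsupp.single k s) x = s * x k := by
  unfold evalPair
  rw [Finsupp.sum_single_index (zero_mul _)]

lemma evalPair_eq_zero_of_disjoint {f x : c00} (h : Disjoint x.support f.support) :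
    evalPair f x = 0 := by
  rw [evalPair_eq_left (Finset.Subset.refl f.support)]
  refine Finset.sum_eq_zero fun k hk => ?_
  rw [Finsupp.notMem_support_iff.1 (fun hx => Finset.disjoint_left.1 h hx hk), mul_zero]

/-! ### Schreier families -/

/-- A form of the defining property of `Schreier (n + 1)` in which the successive pieces are
indexed by an arbitrary finite linearly ordered set. -/
lemma schreier_succ_of_finset {ι : Type*} [LinearOrder ι] {n : ℕ} (K : Finset ι)
    (G : ι → Finset ℕ) (F : Finset ℕ) (hG : ∀ k ∈ K, G k ∈ Schreier n)
    (hlt : ∀ k ∈ K, ∀ l ∈ K, k < l → ∀ i ∈ G k, ∀ j ∈ G l, i < j)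
    (hcard : ∀ i ∈ F, K.card ≤ i) (hF : F = K.biUnion G) : F ∈ Schreier (n + 1) := by
  let e := K.orderEmbOfFin rfl
  refine ⟨K.card, fun k => G (e k), fun k => hG _ (K.orderEmbOfFin_mem rfl k),
    fun k l hkl => hlt _ (K.orderEmbOfFin_mem rfl k) _ (K.orderEmbOfFin_mem rfl l)
      (e.strictMono hkl), hcard, ?_⟩
  rw [hF]
  ext i
  simp only [Finset.mem_biUnion, Finset.mem_univ, true_and]
  constructor
  · rintro ⟨k, hk, hi⟩
    have : k ∈ Set.range e := by
      rw [Finset.range_orderEmbOfFin]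
      exact hk
    obtain ⟨q, rfl⟩ := this
    exact ⟨q, hi⟩
  · rintro ⟨q, hi⟩
    exact ⟨e q, K.orderEmbOfFin_mem rfl q, hi⟩

lemma empty_mem_schreier {n : ℕ} (hn : 0 < n) : (∅ : Finset ℕ) ∈ Schreier n := by
  obtain ⟨n, rfl⟩ := Nat.exists_eq_succ_of_ne_zero hn.ne'
  exact ⟨0, Fin.elim0, fun k => k.elim0, fun k => k.elim0, by simp, by simp⟩

lemma pos_of_mem_schreier {n : ℕ} (hn : 0 < n) {F : Finset ℕ} (hF : F ∈ Schreier n) {i : ℕ}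
    (hi : i ∈ F) : 0 < i := by
  obtain ⟨n, rfl⟩ := Nat.exists_eq_succ_of_ne_zero hn.ne'
  obtain ⟨d, G, -, -, hd, rfl⟩ := hF
  obtain ⟨k, -, -⟩ := Finset.mem_biUnion.1 hi
  exact k.pos.trans_le (hd i hi)

/-- The Schreier families are hereditary and spreading, in one statement: a nonempty set which
a strictly increasing `φ ≤ id` maps into a member of `Schreier n` is itself a member.
(`Schreier 0` does not contain the empty set.) -/
lemma schreier_spread (n : ℕ) : ∀ {F F' : Finset ℕ} (φ : ℕ → ℕ), F ∈ Schreier n →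
    F'.Nonempty → (∀ i ∈ F', φ i ∈ F) → (∀ i ∈ F', φ i ≤ i) →
    (∀ i ∈ F', ∀ k ∈ F', i < k → φ i < φ k) → F' ∈ Schreier n := by
  induction n with
  | zero =>
    rintro F F' φ ⟨i, rfl⟩ ⟨k, hk⟩ hm hle hmono
    refine ⟨k, Finset.eq_singleton_iff_unique_mem.2 ⟨hk, fun l hl => ?_⟩⟩
    have h1 := Finset.mem_singleton.1 (hm k hk)
    have h2 := Finset.mem_singleton.1 (hm l hl)
    rcases lt_trichotomy l k with h | h | h
    · have := hmono l hl k hk h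
      omega
    · exact h
    · have := hmono k hk l hl h
      omega
  | succ n ih =>
    rintro F F' φ ⟨d, G, hG, hlt, hd, rfl⟩ hne hm hle hmono
    let G' : Fin d → Finset ℕ := fun k => F'.filter fun i => φ i ∈ G k
    refine schreier_succ_of_finset (Finset.univ.filter fun k => (G' k).Nonempty) G' F' ?_ ?_ ?_ ?_
    · intro k hk
      refine ih φ (hG k) (Finset.mem_filter.1 hk).2 (fun i hi => (Finset.mem_filter.1 hi).2)
        (fun i hi => hle i (Finset.mem_filter.1 hi).1)
        (fun i hi l hl => hmono i (Finset.mem_filter.1 hi).1 l (Finset.mem_filter.1 hl).1)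
    · intro k _ l _ hkl i hi i' hi'
      obtain ⟨hi, hi2⟩ := Finset.mem_filter.1 hi
      obtain ⟨hi', hi2'⟩ := Finset.mem_filter.1 hi'
      have h1 := hlt k l hkl _ hi2 _ hi2'
      by_contra hcon
      rcases (not_lt.1 hcon).lt_or_eq with h | h
      · exact absurd (hmono i' hi' i hi h) (by omega)
      · subst h
        omega
    · intro i hi
      refine (Finset.card_le_univ _).trans ?_
      rw [Fintype.card_fin]
      exact (hd _ (hm i hi)).trans (hle i hi)
    · ext i
      simp only [Finset.mem_biUnion, Finset.mem_filter, Finset.mem_univ, true_and, G']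
      constructor
      · intro hi
        obtain ⟨k, -, hk⟩ := Finset.mem_biUnion.1 (hm i hi)
        exact ⟨k, ⟨i, Finset.mem_filter.2 ⟨hi, hk⟩⟩, hi, hk⟩
      · rintro ⟨k, -, hi, -⟩
        exact hi

/-! ### Building auxiliary functionals -/

/-- Membership in `A * B` for a union of pieces indexed by a finite linearly ordered set. -/
lemma famStar_of_finset {ι : Type*} [LinearOrder ι] {A B : Set (Finset ℕ)} (K : Finset ι)
    (G : ι → Finset ℕ) (hG : ∀ k ∈ K, G k ∈ B) (hne : ∀ k ∈ K, (G k).Nonempty)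
    (hlt : ∀ k ∈ K, ∀ l ∈ K, k < l → ∀ i ∈ G k, ∀ j ∈ G l, i < j)
    (hA : K.image (fun k => finsetMin (G k)) ∈ A) : K.biUnion G ∈ famStar A B := by
  let e := K.orderEmbOfFin rfl
  have hrange : ∀ k ∈ K, ∃ q, e q = k := fun k hk => by
    have : k ∈ Set.range e := by
      rw [Finset.range_orderEmbOfFin]
      exact hk
    exact this
  refine ⟨K.card, fun k => G (e k), fun k => hG _ (K.orderEmbOfFin_mem rfl k),
    fun k => hne _ (K.orderEmbOfFin_mem rfl k),
    fun k l hkl => hlt _ (K.orderEmbOfFin_mem rfl k) _ (K.orderEmbOfFin_mem rfl l)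
      (e.strictMono hkl), ?_, ?_⟩
  · convert hA using 1
    ext i
    simp only [Finset.mem_image, Finset.mem_univ, true_and]
    constructor
    · rintro ⟨q, hq⟩
      exact ⟨e q, K.orderEmbOfFin_mem rfl q, hq⟩
    · rintro ⟨k, hk, hi⟩
      obtain ⟨q, rfl⟩ := hrange k hk
      exact ⟨q, hi⟩
  · ext i
    simp only [Finset.mem_biUnion, Finset.mem_univ, true_and]
    constructor
    · rintro ⟨k, hk, hi⟩
      obtain ⟨q, rfl⟩ := hrange k hk
      exact ⟨q, hi⟩
    · rintro ⟨q, hi⟩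
      exact ⟨e q, K.orderEmbOfFin_mem rfl q, hi⟩

/-- The closure property of `WAux` for sequences indexed by a finite linearly ordered set. -/
lemma WAux.op_finset {P : IWParams} {N : ℕ} {ι : Type*} [LinearOrder ι] (T : Finset ι)
    {l : ℕ} (hl : 0 < l) (js : Fin l → ℕ) (F : ι → c00) (w : ι → ℕ∞)
    (hF : ∀ t ∈ T, WAux P N (F t) (w t)) (hne : ∀ t ∈ T, (F t).support.Nonempty)
    (hblk : ∀ s ∈ T, ∀ t ∈ T, s < t → Blocks (F s) (F t))
    (hadm : T.image (fun t => minSupp (F t)) ∈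
      famStar (Schreier (∑ i, P.n (js i))) (SchreierA 3))
    (hlarge : ∀ s ∈ T, ∀ t ∈ T, s < t → (N : ℕ∞) < w t) :
    WAux P N (((∏ i, P.m (js i) : ℕ) : ℝ)⁻¹ • ∑ t ∈ T, F t) ((∏ i, P.m (js i) : ℕ) : ℕ∞) := by
  let e := T.orderEmbOfFin rfl
  have he : ∀ q, e q ∈ T := T.orderEmbOfFin_mem rfl
  have himg : Finset.univ.image e = T := by
    apply Finset.coe_injective
    rw [Finset.coe_image, Finset.coe_univ, Set.image_univ]
    exact Finset.range_orderEmbOfFin T rfl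
  have hsum : ∑ t ∈ T, F t = ∑ q, F (e q) := by
    conv_lhs => rw [← himg]
    rw [Finset.sum_image fun q _ r _ h => e.injective h]
  rw [hsum]
  refine WAux.op l hl js T.card (fun q => F (e q)) (fun q => w (e q)) (fun q => hF _ (he q))
    ⟨fun q => hne _ (he q), fun q r h => hblk _ (he q) _ (he r) (e.strictMono h), ?_⟩ ?_
  · have : (Finset.univ.image fun q => minSupp (F (e q))) = T.image fun t => minSupp (F t) := by
      conv_rhs => rw [← himg]
      rw [Finset.image_image]
      rfl
    rw [this]
    exact hadm
  · intro q hq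
    have h0 : 0 < T.card := q.pos
    exact hlarge (e ⟨0, h0⟩) (he _) (e q) (he q) (e.strictMono hq)

/-- The combinatorial core: replacing each member `f q` of an `S_n`-admissible sequence by at
most three successive auxiliary functionals `F (q, r)` supported to the right of `min supp (f q)`
gives an `S_n * A_3`-admissible sequence. Zero entries `F (q, r) = 0` are allowed and discarded,
which is why the lexicographic order is used for indexing. -/
lemma WAux.op_triples {P : IWParams} {N l d : ℕ} (hl : 0 < l) (js : Fin l → ℕ) (f : Fin d → c00)
    (hadm : Admissible (Schreier (∑ i, P.n (js i))) f)
    (F : Fin d ×ₗ Fin 3 → c00) (w : Fin d ×ₗ Fin 3 → ℕ∞)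
    (hF : ∀ t, F t = 0 ∨ WAux P N (F t) (w t))
    (hlt : ∀ s t, s < t → ∀ k ∈ (F s).support, ∀ k' ∈ (F t).support, k < k')
    (hmin : ∀ t, ∀ k ∈ (F t).support, minSupp (f (ofLex t).1) ≤ k)
    (hlarge : ∀ s t, s < t → F s ≠ 0 → F t ≠ 0 → (N : ℕ∞) < w t) :
    WAux P N (((∏ i, P.m (js i) : ℕ) : ℝ)⁻¹ • ∑ t, F t) ((∏ i, P.m (js i) : ℕ) : ℕ∞) := by
  classical
  have hn : 0 < ∑ i, P.n (js i) := by
    have h1 : P.n (js ⟨0, hl⟩) ≤ ∑ i, P.n (js i) :=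
      Finset.single_le_sum (f := fun i => P.n (js i)) (fun i _ => Nat.zero_le _)
        (Finset.mem_univ _)
    have h2 := P.n_mono.monotone (Nat.zero_le (js ⟨0, hl⟩))
    rw [P.n_first] at h2
    omega
  let T : Finset (Fin d ×ₗ Fin 3) := Finset.univ.filter fun t => F t ≠ 0
  have hT : ∀ t ∈ T, F t ≠ 0 := fun t ht => (Finset.mem_filter.1 ht).2
  have hTne : ∀ t ∈ T, (F t).support.Nonempty := fun t ht =>
    Finsupp.support_nonempty_iff.2 (hT t ht)
  have hsum : ∑ t, F t = ∑ t ∈ T, F t := by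
    symm
    refine Finset.sum_subset (Finset.subset_univ _) fun t _ ht => ?_
    by_contra h
    exact ht (Finset.mem_filter.2 ⟨Finset.mem_univ _, h⟩)
  have hms : ∀ s ∈ T, ∀ t ∈ T, s < t → minSupp (F s) < minSupp (F t) := fun s hs t ht hst =>
    hlt s t hst _ (minSupp_mem (hTne s hs)) _ (minSupp_mem (hTne t ht))
  rw [hsum]
  refine WAux.op_finset T hl js F w (fun t ht => (hF t).resolve_left (hT t ht)) hTne
    (fun s hs t ht hst => hlt s t hst _ (maxSupp_mem (hTne s hs)) _ (minSupp_mem (hTne t ht)))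
    ?_ (fun s hs t ht hst => hlarge s t hst (hT s hs) (hT t ht))
  let Q : Finset (Fin d) := T.image fun t => (ofLex t).1
  let G : Fin d → Finset ℕ := fun q =>
    (T.filter fun t => (ofLex t).1 = q).image fun t => minSupp (F t)
  have hmemG : ∀ q i, i ∈ G q ↔ ∃ t ∈ T, (ofLex t).1 = q ∧ minSupp (F t) = i := by
    intro q i
    simp only [G, Finset.mem_image, Finset.mem_filter, and_assoc]
  have hGne : ∀ q ∈ Q, (G q).Nonempty := by
    intro q hq
    obtain ⟨t, ht, htq⟩ := Finset.mem_image.1 hq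
    exact ⟨_, (hmemG _ _).2 ⟨t, ht, htq, rfl⟩⟩
  have hGlt : ∀ q r, q < r → ∀ i ∈ G q, ∀ j ∈ G r, i < j := by
    intro q r hqr i hi j hj
    obtain ⟨s, hs, rfl, rfl⟩ := (hmemG _ _).1 hi
    obtain ⟨t, ht, rfl, rfl⟩ := (hmemG _ _).1 hj
    exact hms s hs t ht (Prod.Lex.lt_iff.2 (Or.inl hqr))
  have hU : T.image (fun t => minSupp (F t)) = Q.biUnion G := by
    ext i
    simp only [Finset.mem_biUnion, hmemG, Finset.mem_image]
    constructor
    · rintro ⟨t, ht, rfl⟩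
      exact ⟨_, Finset.mem_image.2 ⟨t, ht, rfl⟩, t, ht, rfl, rfl⟩
    · rintro ⟨q, -, t, ht, -, rfl⟩
      exact ⟨t, ht, rfl⟩
  rw [hU]
  refine famStar_of_finset Q G ?_ hGne (fun q _ r _ => hGlt q r) ?_
  · intro q _
    refine Finset.card_image_le.trans ?_
    refine (Finset.card_le_card_of_injOn (t := (Finset.univ : Finset (Fin 3)))
      (fun t => (ofLex t).2) (fun t _ => by simp) ?_).trans (by simp)
    intro s hs t ht hst
    have h1 := (Finset.mem_filter.1 hs).2
    have h2 := (Finset.mem_filter.1 ht).2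
    exact ofLex.injective (Prod.ext (h1.trans h2.symm) hst)
  · rcases Q.eq_empty_or_nonempty with hQ | hQ
    · rw [hQ, Finset.image_empty]
      exact empty_mem_schreier hn
    -- The map `min G q ↦ min supp (f q)` witnesses spreading.
    have hinj : ∀ q ∈ Q, ∀ r ∈ Q, q < r → finsetMin (G q) < finsetMin (G r) :=
      fun q hq r hr hqr => hGlt q r hqr _ (finsetMin_mem (hGne q hq)) _ (finsetMin_mem (hGne r hr))
    have hinv : ∀ i ∈ Q.image (fun k => finsetMin (G k)), ∃ q ∈ Q, finsetMin (G q) = i :=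
      fun i hi => Finset.mem_image.1 hi
    have : Nonempty (Fin d) := ⟨hQ.choose⟩
    choose! ψ hψQ hψ using hinv
    refine schreier_spread _ (fun i => minSupp (f (ψ i))) hadm.2.2 (hQ.image _) ?_ ?_ ?_
    · intro i _
      exact Finset.mem_image.2 ⟨ψ i, Finset.mem_univ _, rfl⟩
    · intro i hi
      have hm := finsetMin_mem (hGne _ (hψQ i hi))
      rw [hψ i hi] at hm
      obtain ⟨t, ht, htq, hti⟩ := (hmemG _ _).1 hm
      have := hmin t _ (minSupp_mem (hTne t ht))
      rw [htq, hti] at this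
      exact this
    · intro i hi k hk hik
      have hlt' : ψ i < ψ k := by
        by_contra hcon
        rcases (not_lt.1 hcon).lt_or_eq with h | h
        · have := hinj _ (hψQ k hk) _ (hψQ i hi) h
          rw [hψ i hi, hψ k hk] at this
          omega
        · have h1 := hψ k hk
          rw [h, hψ i hi] at h1
          omega
      exact (hadm.2.1 _ _ hlt').lt (minSupp_mem (hadm.1 _)) (minSupp_mem (hadm.1 _))

/-! ### Elementary properties of the norming set -/

lemma abs_sum_apply_le {d : ℕ} {f : Fin d → c00} (hblk : ∀ q r : Fin d, q < r → Blocks (f q) (f r))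
    {B : ℝ} (hB : 0 ≤ B) {k : ℕ} (h : ∀ q, |f q k| ≤ B) : |(∑ q, f q) k| ≤ B := by
  rw [Finsupp.finsetSum_apply]
  by_cases hk : ∃ q, f q k ≠ 0
  · obtain ⟨q, hq⟩ := hk
    rw [Finset.sum_eq_single q]
    · exact h q
    · intro r _ hr
      by_contra hne
      rcases lt_or_gt_of_ne hr with hlt | hlt
      · exact lt_irrefl k ((hblk _ _ hlt).lt (Finsupp.mem_support_iff.2 hne)
          (Finsupp.mem_support_iff.2 hq))
      · exact lt_irrefl k ((hblk _ _ hlt).lt (Finsupp.mem_support_iff.2 hq)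
          (Finsupp.mem_support_iff.2 hne))
    · simp
  · push Not at hk
    rw [Finset.sum_eq_zero fun q _ => hk q, abs_zero]
    exact hB

lemma two_le_m (P : IWParams) (i : ℕ) : 2 ≤ P.m i := by
  rw [← P.m_first]
  exact P.m_mono.monotone (Nat.zero_le i)

lemma one_le_weight (P : IWParams) {l : ℕ} (js : Fin l → ℕ) : 1 ≤ ∏ i, P.m (js i) :=
  Nat.one_le_iff_ne_zero.2 (Finset.prod_ne_zero_iff.2 fun i _ => by have := two_le_m P (js i); omega)

lemma WIW.abs_apply_le_one {P : IWParams} {f : c00} {w : ℕ∞} (hf : WIW P f w) (k : ℕ) :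
    |f k| ≤ 1 := by
  induction hf with
  | unit i s hs =>
    rw [Finsupp.single_apply]
    rcases hs with rfl | rfl <;> split_ifs <;> simp
  | op l hl js d f w hf hadm hvfg ih =>
    have h1 : (1 : ℝ) ≤ ((∏ i, P.m (js i) : ℕ) : ℝ) := by exact_mod_cast one_le_weight P js
    rw [Finsupp.smul_apply, smul_eq_mul, abs_mul, abs_of_nonneg (by positivity)]
    exact mul_le_one₀ (inv_le_one_of_one_le₀ h1) (abs_nonneg _)
      (abs_sum_apply_le hadm.2.1 zero_le_one ih)

lemma WIW.neg {P : IWParams} {f : c00} {w : ℕ∞} (hf : WIW P f w) : WIW P (-f) w := by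
  induction hf with
  | unit i s hs =>
    rw [← Finsupp.single_neg]
    refine WIW.unit i (-s) ?_
    rcases hs with rfl | rfl <;> simp
  | op l hl js d f w hf hadm hvfg ih =>
    have hmin : ∀ g : c00, minSupp (-g) = minSupp g := fun g => by
      simp only [minSupp, Finsupp.support_neg]
    have hmax : ∀ g : c00, maxSupp (-g) = maxSupp g := fun g => by
      simp only [maxSupp, Finsupp.support_neg]
    rw [← smul_neg, ← Finset.sum_neg_distrib]
    refine WIW.op l hl js d (fun q => -f q) w ih ⟨?_, ?_, ?_⟩ ?_
    · intro q
      rw [Finsupp.support_neg]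
      exact hadm.1 q
    · intro q r h
      unfold Blocks
      rw [hmin, hmax]
      exact hadm.2.1 q r h
    · simp only [hmin]
      exact hadm.2.2
    · intro q r h
      rw [hmax]
      exact hvfg q r h

lemma evalPair_neg_left (f x : c00) : evalPair (-f) x = -evalPair f x := by
  rw [← neg_one_smul ℝ f, evalPair_smul_left, neg_one_mul]

/-- The supremum defining `iwNorm` is over a bounded set, since the members of the norming set
have coefficients in `[-1, 1]`; hence it is a genuine upper bound. -/
lemma WIW.abs_evalPair_le {P : IWParams} {f : c00} {w : ℕ∞} (hf : WIW P f w) (x : c00) :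
    |evalPair f x| ≤ iwNorm P x := by
  have hbdd : BddAbove {r | ∃ f, memWIW P f ∧ r = evalPair f x} := by
    refine ⟨∑ k ∈ x.support, |x k|, ?_⟩
    rintro r ⟨g, ⟨w, hg⟩, rfl⟩
    rw [evalPair_eq_right (Finset.Subset.refl x.support)]
    refine Finset.sum_le_sum fun k _ => (le_abs_self _).trans ?_
    rw [abs_mul]
    exact mul_le_of_le_one_left (abs_nonneg _) (hg.abs_apply_le_one k)
  refine abs_le'.2 ⟨le_csSup hbdd ⟨f, ⟨w, hf⟩, rfl⟩, ?_⟩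
  rw [← evalPair_neg_left]
  exact le_csSup hbdd ⟨-f, ⟨w, hf.neg⟩, rfl⟩

lemma abs_apply_le_iwNorm (P : IWParams) (x : c00) (k : ℕ) : |x k| ≤ iwNorm P x := by
  have := (WIW.unit (P := P) k 1 (Or.inl rfl)).abs_evalPair_le x
  rwa [evalPair_single_left, one_mul] at this

/-- A choice of sign making `s * r = |r|`. -/
lemma exists_sign (r : ℝ) : ∃ s : ℝ, (s = 1 ∨ s = -1) ∧ s * r = |r| := by
  rcases le_total 0 r with h | h
  · exact ⟨1, Or.inl rfl, by rw [one_mul, abs_of_nonneg h]⟩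
  · exact ⟨-1, Or.inr rfl, by rw [abs_of_nonpos h, neg_one_mul]⟩

/-! ### The two halves of the inductive step -/

/-- The properties of a rapidly increasing sequence used in the induction, in a form inherited by
arbitrary (not necessarily interval) subsets of the index set: the growth condition relates any
two indices and not only consecutive ones. `M` stands for the first `m_{j_i}` and `N` for the
parameter of the auxiliary norming set. -/
structure HeredRIS (P : IWParams) (C : ℝ) (M N : ℕ) (I : Finset ℕ) (j : ℕ → ℕ)
    (x : ℕ → c00) : Prop where
  one_le : 1 ≤ C
  j_lt : ∀ a ∈ I, ∀ b ∈ I, a < b → j a < j b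
  ne : ∀ i ∈ I, (x i).support.Nonempty
  blocks : ∀ a ∈ I, ∀ b ∈ I, a < b → Blocks (x a) (x b)
  norm_le : ∀ i ∈ I, iwNorm P (x i) ≤ C
  fast : ∀ a ∈ I, ∀ b ∈ I, a < b → (maxSupp (x a) : ℝ) < Real.sqrt (P.m (j b))
  weight : ∀ i ∈ I, ∀ f w, WIW P f w → w < ((P.m (j i) : ℕ) : ℕ∞) →
    |evalPair f (x i)| ≤ C / (w.toNat : ℝ)
  M_le : ∀ i ∈ I, M ≤ P.m (j i)
  N_lt : N < M
  N_lt_minSupp : ∀ i ∈ I, N < minSupp (x i)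

/-- The vector `∑ a_i e_{t_i}`, `t_i = max supp x_i`, on which auxiliary functionals are
evaluated. -/
noncomputable def tipVector (I : Finset ℕ) (x : ℕ → c00) (a : ℕ → ℝ) : c00 :=
  ∑ i ∈ I, a i • Finsupp.single (maxSupp (x i)) (1 : ℝ)

/-- The induction hypothesis of the basic inequality for a functional `f` of weight `w` and the
index subset `J`. Both terms on the right are required to be nonnegative, so that the estimates
for pieces can be added, and `h` has to precede `g`, so that the pair `h, g` can be used as two
consecutive members of an admissible sequence. A nonzero `h` forces `N < w`, which provides the
`N`-largeness of `g` when it comes after `h`. -/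
def BasicIneq (P : IWParams) (C : ℝ) (M N : ℕ) (I : Finset ℕ) (x : ℕ → c00) (a : ℕ → ℝ)
    (f : c00) (w : ℕ∞) (J : Finset ℕ) : Prop :=
  ∃ h g : c00,
    (h = 0 ∨ ((N : ℕ∞) < w ∧ ∃ i ∈ J, ∃ s : ℝ, (s = 1 ∨ s = -1) ∧
      h = Finsupp.single (maxSupp (x i)) s)) ∧
    WAux P N g w ∧
    g.support ⊆ J.image (fun i => maxSupp (x i)) ∧
    (∀ k ∈ h.support, ∀ k' ∈ g.support, k < k') ∧
    0 ≤ evalPair h (tipVector I x a) ∧ 0 ≤ evalPair g (tipVector I x a) ∧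
    |∑ i ∈ J, a i * evalPair f (x i)| ≤ C * (1 + 1 / Real.sqrt M) *
      (evalPair h (tipVector I x a) + evalPair g (tipVector I x a))

section Induction

variable {P : IWParams} {C : ℝ} {M N : ℕ} {I : Finset ℕ} {j : ℕ → ℕ} {x : ℕ → c00}

lemma HeredRIS.maxSupp_lt (D : HeredRIS P C M N I j x) {i i' : ℕ} (hi : i ∈ I) (hi' : i' ∈ I)
    (h : i < i') : maxSupp (x i) < maxSupp (x i') :=
  (D.blocks i hi i' hi' h).lt (maxSupp_mem (D.ne i hi)) (maxSupp_mem (D.ne i' hi'))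

lemma HeredRIS.tipVector_apply (D : HeredRIS P C M N I j x) (a : ℕ → ℝ) {i : ℕ} (hi : i ∈ I) :
    tipVector I x a (maxSupp (x i)) = a i := by
  unfold tipVector
  rw [Finsupp.finsetSum_apply, Finset.sum_eq_single i]
  · simp
  · intro b hb hne
    have : maxSupp (x b) ≠ maxSupp (x i) := by
      rcases lt_or_gt_of_ne hne with h | h
      · exact (D.maxSupp_lt hb hi h).ne
      · exact (D.maxSupp_lt hi hb h).ne'
    simp [this]
  · exact fun h => absurd hi h

lemma HeredRIS.le_const (D : HeredRIS P C M N I j x) : C ≤ C * (1 + 1 / Real.sqrt M) := by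
  have := D.one_le
  exact le_mul_of_one_le_right (by linarith) (by simp)

/-- The indices `i` with `m_{j_i} ≤ W = w(f)`. Before the last of them, `f` sees at most
`√W` coordinates with coefficients at most `1 / W`, and on the last vector `f` is bounded by the
norm. -/
lemma HeredRIS.low_part (D : HeredRIS P C M N I j x) (a : ℕ → ℝ) {f : c00} {w : ℕ∞} {W : ℕ}
    (hW : 1 ≤ W) (hf : WIW P f w) (hsmall : ∀ k, |f k| ≤ (W : ℝ)⁻¹) (hzero : f 0 = 0)
    {L : Finset ℕ} (hLI : L ⊆ I) (hL : L.Nonempty) (hlow : ∀ i ∈ L, P.m (j i) ≤ W) :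
    ∃ i ∈ L, |∑ i ∈ L, a i * evalPair f (x i)| ≤ C * (1 + 1 / Real.sqrt M) * |a i| := by
  classical
  obtain ⟨i₂, hi₂, hmax⟩ := L.exists_max_image (fun i => |a i|) hL
  refine ⟨i₂, hi₂, ?_⟩
  have hC0 : 0 ≤ C := by linarith [D.one_le]
  have hW0 : (0 : ℝ) < W := by exact_mod_cast hW
  let i₁ := L.max' hL
  have hi₁ : i₁ ∈ L := L.max'_mem hL
  let L' := L.erase i₁
  have hL'lt : ∀ i ∈ L', i < i₁ := fun i hi =>
    lt_of_le_of_ne (L.le_max' i (Finset.mem_of_mem_erase hi)) (Finset.ne_of_mem_erase hi)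
  have hL'L : ∀ i ∈ L', i ∈ L := fun i hi => Finset.mem_of_mem_erase hi
  -- `R` is the last coordinate occurring in the vectors before the last one.
  let R := L'.sup fun i => maxSupp (x i)
  have hR : (R : ℝ) ≤ Real.sqrt W := by
    rcases L'.eq_empty_or_nonempty with he | hne
    · have : R = 0 := by simp [R, he]
      rw [this]
      simp
    · obtain ⟨i, hi, hiR⟩ := L'.exists_mem_eq_sup hne fun i => maxSupp (x i)
      have h1 := D.fast i (hLI (hL'L i hi)) i₁ (hLI hi₁) (hL'lt i hi)
      have h2 : Real.sqrt (P.m (j i₁)) ≤ Real.sqrt W :=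
        Real.sqrt_le_sqrt (by exact_mod_cast hlow i₁ hi₁)
      change ((L'.sup fun i => maxSupp (x i) : ℕ) : ℝ) ≤ _
      rw [hiR]
      exact h1.le.trans h2
  have hev : ∀ i ∈ L', evalPair f (x i) = ∑ k ∈ Finset.Icc 1 R, f k * x i k := by
    intro i hi
    rw [evalPair_eq_right (S := Finset.Icc 0 R)]
    · symm
      refine Finset.sum_subset (Finset.Icc_subset_Icc_left zero_le_one) fun k hk hk' => ?_
      have : k = 0 := by
        simp only [Finset.mem_Icc] at hk hk'
        omega
      rw [this, hzero, zero_mul]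
    · intro k hk
      exact Finset.mem_Icc.2 ⟨Nat.zero_le _, (le_maxSupp hk).trans
        (Finset.le_sup (f := fun i => maxSupp (x i)) hi)⟩
  have hone : ∀ k, |∑ i ∈ L', a i * x i k| ≤ |a i₂| * C := by
    intro k
    by_cases hk : ∃ i ∈ L', x i k ≠ 0
    · obtain ⟨i, hi, hik⟩ := hk
      rw [Finset.sum_eq_single i]
      · rw [abs_mul]
        exact mul_le_mul (hmax i (hL'L i hi))
          ((abs_apply_le_iwNorm P _ k).trans (D.norm_le i (hLI (hL'L i hi)))) (abs_nonneg _)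
          (abs_nonneg _)
      · intro b hb hbi
        by_contra hne
        have hbk : k ∈ (x b).support := Finsupp.mem_support_iff.2 fun h => hne (by rw [h, mul_zero])
        have hik' : k ∈ (x i).support := Finsupp.mem_support_iff.2 hik
        rcases lt_or_gt_of_ne hbi with h | h
        · exact lt_irrefl k ((D.blocks b (hLI (hL'L b hb)) i (hLI (hL'L i hi)) h).lt hbk hik')
        · exact lt_irrefl k ((D.blocks i (hLI (hL'L i hi)) b (hLI (hL'L b hb)) h).lt hik' hbk)
      · exact fun h => absurd hi h
    · push Not at hk
      rw [Finset.sum_eq_zero fun i hi => by rw [hk i hi, mul_zero], abs_zero]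
      positivity
  have hfirst : |∑ i ∈ L', a i * evalPair f (x i)| ≤ C * (1 / Real.sqrt M) * |a i₂| := by
    have h1 : ∑ i ∈ L', a i * evalPair f (x i) =
        ∑ k ∈ Finset.Icc 1 R, f k * ∑ i ∈ L', a i * x i k := by
      rw [Finset.sum_congr rfl fun i hi => by rw [hev i hi]]
      simp only [Finset.mul_sum]
      rw [Finset.sum_comm]
      exact Finset.sum_congr rfl fun i _ => Finset.sum_congr rfl fun k _ => by ring
    rw [h1]
    have h2 : |∑ k ∈ Finset.Icc 1 R, f k * ∑ i ∈ L', a i * x i k| ≤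
        ∑ k ∈ Finset.Icc 1 R, (W : ℝ)⁻¹ * (|a i₂| * C) := by
      refine (Finset.abs_sum_le_sum_abs _ _).trans (Finset.sum_le_sum fun k _ => ?_)
      rw [abs_mul]
      exact mul_le_mul (hsmall k) (hone k) (abs_nonneg _) (by positivity)
    refine h2.trans ?_
    rw [Finset.sum_const, Nat.card_Icc, Nat.add_sub_cancel, nsmul_eq_mul]
    have hM0 : (0 : ℝ) < M := by exact_mod_cast (Nat.zero_le N).trans_lt D.N_lt
    have hMW : (M : ℝ) ≤ W := by
      exact_mod_cast (D.M_le i₁ (hLI hi₁)).trans (hlow i₁ hi₁)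
    have h3 : (R : ℝ) * (W : ℝ)⁻¹ ≤ 1 / Real.sqrt M := by
      have hs : Real.sqrt W * (W : ℝ)⁻¹ = 1 / Real.sqrt W := by
        have := Real.mul_self_sqrt hW0.le
        have h' : 0 < Real.sqrt W := Real.sqrt_pos.2 hW0
        field_simp
        nlinarith
      calc (R : ℝ) * (W : ℝ)⁻¹ ≤ Real.sqrt W * (W : ℝ)⁻¹ := by gcongr
        _ = 1 / Real.sqrt W := hs
        _ ≤ 1 / Real.sqrt M := one_div_le_one_div_of_le (Real.sqrt_pos.2 hM0)
            (Real.sqrt_le_sqrt hMW)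
    calc (R : ℝ) * ((W : ℝ)⁻¹ * (|a i₂| * C)) = (R : ℝ) * (W : ℝ)⁻¹ * (|a i₂| * C) := by ring
      _ ≤ 1 / Real.sqrt M * (|a i₂| * C) := by gcongr
      _ = C * (1 / Real.sqrt M) * |a i₂| := by ring
  have hlast : |a i₁ * evalPair f (x i₁)| ≤ C * |a i₂| := by
    rw [abs_mul, mul_comm C]
    exact mul_le_mul (hmax i₁ hi₁) ((hf.abs_evalPair_le _).trans (D.norm_le i₁ (hLI hi₁)))
      (abs_nonneg _) (abs_nonneg _)
  rw [← Finset.add_sum_erase L _ hi₁]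
  calc |a i₁ * evalPair f (x i₁) + ∑ i ∈ L', a i * evalPair f (x i)|
      ≤ |a i₁ * evalPair f (x i₁)| + |∑ i ∈ L', a i * evalPair f (x i)| := abs_add_le _ _
    _ ≤ C * |a i₂| + C * (1 / Real.sqrt M) * |a i₂| := add_le_add hlast hfirst
    _ = C * (1 + 1 / Real.sqrt M) * |a i₂| := by ring

/-- The indices `i` with `m_{j_i} > W = w(f)`, where `f = W⁻¹ ∑ f_q`. The vectors meeting a single
`f_q` are handled by the induction hypothesis for `f_q`; for each `q` there is at most one vector
meeting `f_q` first and some later `f_r` as well, and on it `f` is at most `C / W`. Each `f_q` thus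
gives rise to at most three auxiliary functionals. -/
lemma HeredRIS.high_part (D : HeredRIS P C M N I j x) (a : ℕ → ℝ) {l : ℕ} (hl : 0 < l)
    (js : Fin l → ℕ) {d : ℕ} (f : Fin d → c00) (w : Fin d → ℕ∞) (hf : ∀ q, WIW P (f q) (w q))
    (hadm : Admissible (Schreier (∑ i, P.n (js i))) f)
    (hvfg : ∀ q r : Fin d, (q : ℕ) + 1 = (r : ℕ) → (maxSupp (f q) : ℕ∞) < w r)
    (ih : ∀ q, ∀ J ⊆ I, J.Nonempty → BasicIneq P C M N I x a (f q) (w q) J)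
    {H : Finset ℕ} (hHI : H ⊆ I) (hhigh : ∀ i ∈ H, ∏ i, P.m (js i) < P.m (j i)) :
    ∃ g : c00, WAux P N g ((∏ i, P.m (js i) : ℕ) : ℕ∞) ∧
      g.support ⊆ H.image (fun i => maxSupp (x i)) ∧
      0 ≤ evalPair g (tipVector I x a) ∧
      |∑ i ∈ H, a i * evalPair (((∏ i, P.m (js i) : ℕ) : ℝ)⁻¹ • ∑ q, f q) (x i)| ≤
        C * (1 + 1 / Real.sqrt M) * evalPair g (tipVector I x a) := by
  classical
  set W : ℕ := ∏ i, P.m (js i) with hWdef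
  set y := tipVector I x a with hy
  set K := C * (1 + 1 / Real.sqrt M) with hK
  have hCK : C ≤ K := D.le_const
  have hC0 : 0 ≤ C := by linarith [D.one_le]
  have hW1 : 1 ≤ W := one_le_weight P js
  have hW0 : (0 : ℝ) < W := by exact_mod_cast hW1
  have hWf : WIW P ((W : ℝ)⁻¹ • ∑ q, f q) (W : ℕ∞) := WIW.op l hl js d f w hf hadm hvfg
  let meets : ℕ → Fin d → Prop := fun i q => ∃ k ∈ (x i).support, k ∈ (f q).support
  have hnomeet : ∀ i q, ¬ meets i q → evalPair (f q) (x i) = 0 := fun i q h =>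
    evalPair_eq_zero_of_disjoint (Finset.disjoint_left.2 fun k hkx hkf => h ⟨k, hkx, hkf⟩)
  -- A vector meeting a later functional is not followed by one meeting an earlier functional.
  have hcross : ∀ i ∈ H, ∀ i' ∈ H, ∀ q q', q < q' → meets i q → meets i' q' → i ≤ i' := by
    rintro i hi i' hi' q q' hq ⟨k, hk, hkq⟩ ⟨k', hk', hkq'⟩
    by_contra hlt
    have h1 := (D.blocks i' (hHI hi') i (hHI hi) (not_le.1 hlt)).lt hk' hk
    have h2 := (hadm.2.1 q q' hq).lt hkq hkq'
    omega
  let B : Fin d → Finset ℕ := fun q => H.filter fun i => meets i q ∧ ∀ r, meets i r → r = q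
  let A : Fin d → Finset ℕ := fun q => H.filter fun i =>
    meets i q ∧ (∀ r, meets i r → q ≤ r) ∧ ∃ r, q < r ∧ meets i r
  have hB : ∀ q i, i ∈ B q ↔ i ∈ H ∧ meets i q ∧ ∀ r, meets i r → r = q := fun q i =>
    Finset.mem_filter
  have hA : ∀ q i, i ∈ A q ↔ i ∈ H ∧ meets i q ∧ (∀ r, meets i r → q ≤ r) ∧
      ∃ r, q < r ∧ meets i r := fun q i => Finset.mem_filter
  have hAB : ∀ q, Disjoint (A q) (B q) := by
    intro q
    refine Finset.disjoint_left.2 fun i hi hi' => ?_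
    obtain ⟨r, hr, hm⟩ := ((hA q i).1 hi).2.2.2
    exact hr.ne' (((hB q i).1 hi').2.2 r hm)
  have hE : ∀ q, ∀ i ∈ A q ∪ B q, i ∈ H ∧ meets i q ∧ ∀ r, meets i r → q ≤ r := by
    intro q i hi
    rcases Finset.mem_union.1 hi with h | h
    · exact ⟨((hA q i).1 h).1, ((hA q i).1 h).2.1, ((hA q i).1 h).2.2.1⟩
    · exact ⟨((hB q i).1 h).1, ((hB q i).1 h).2.1, fun r hr => (((hB q i).1 h).2.2 r hr).ge⟩
  have hEH : ∀ q, A q ∪ B q ⊆ H := fun q i hi => (hE q i hi).1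
  have hElt : ∀ q r, q < r → ∀ i ∈ A q ∪ B q, ∀ i' ∈ A r ∪ B r, i < i' := by
    intro q r hqr i hi i' hi'
    obtain ⟨h1, h2, h3⟩ := hE q i hi
    obtain ⟨h1', h2', h3'⟩ := hE r i' hi'
    refine lt_of_le_of_ne (hcross i h1 i' h1' q r hqr h2 h2') ?_
    rintro rfl
    exact absurd (h3' q h2) (not_le.2 hqr)
  have hBA : ∀ q, ∀ i ∈ B q, ∀ i' ∈ A q, i < i' := by
    intro q i hi i' hi'
    obtain ⟨r, hr, hm⟩ := ((hA q i').1 hi').2.2.2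
    refine lt_of_le_of_ne (hcross i ((hB q i).1 hi).1 i' ((hA q i').1 hi').1 q r hr
      ((hB q i).1 hi).2.1 hm) ?_
    rintro rfl
    exact Finset.disjoint_left.1 (hAB q) hi' hi
  have hAone : ∀ q, ∀ i ∈ A q, ∀ i' ∈ A q, i = i' := by
    intro q i hi i' hi'
    obtain ⟨r, hr, hm⟩ := ((hA q i).1 hi).2.2.2
    obtain ⟨r', hr', hm'⟩ := ((hA q i').1 hi').2.2.2
    exact le_antisymm
      (hcross i ((hA q i).1 hi).1 i' ((hA q i').1 hi').1 q r' hr' ((hA q i).1 hi).2.1 hm')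
      (hcross i' ((hA q i').1 hi').1 i ((hA q i).1 hi).1 q r hr ((hA q i').1 hi').2.1 hm)
  have hlen : ∀ i ∈ H, |evalPair ((W : ℝ)⁻¹ • ∑ q, f q) (x i)| ≤ C * (W : ℝ)⁻¹ := by
    intro i hi
    have := D.weight i (hHI hi) _ _ hWf (by exact_mod_cast hhigh i hi)
    rwa [ENat.toNat_natCast, div_eq_mul_inv] at this
  -- The at most two functionals coming from the vectors meeting `f q` only.
  have hBq : ∀ q, ∃ h g : c00,
      (h = 0 ∨ ((N : ℕ∞) < w q ∧ ∃ i ∈ B q, ∃ s : ℝ, (s = 1 ∨ s = -1) ∧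
        h = Finsupp.single (maxSupp (x i)) s)) ∧
      (g = 0 ∨ WAux P N g (w q)) ∧ g.support ⊆ (B q).image (fun i => maxSupp (x i)) ∧
      (∀ k ∈ h.support, ∀ k' ∈ g.support, k < k') ∧ 0 ≤ evalPair h y ∧ 0 ≤ evalPair g y ∧
      |∑ i ∈ B q, a i * evalPair (f q) (x i)| ≤ K * (evalPair h y + evalPair g y) := by
    intro q
    rcases (B q).eq_empty_or_nonempty with he | hne
    · refine ⟨0, 0, Or.inl rfl, Or.inl rfl, by simp, by simp, ?_, ?_, ?_⟩ <;>
        simp [evalPair_zero_left, he]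
    · obtain ⟨h, g, h1, h2, h3⟩ := ih q (B q) ((Finset.filter_subset _ _).trans hHI) hne
      exact ⟨h, g, h1, Or.inr h2, h3⟩
  -- The single functional coming from the vector that starts in `f q` and goes beyond it.
  have hAq : ∀ q, ∃ u : c00, (u = 0 ∨ ∃ i ∈ A q, ∃ s : ℝ, (s = 1 ∨ s = -1) ∧
        u = Finsupp.single (maxSupp (x i)) s) ∧ 0 ≤ evalPair u y ∧
      |∑ i ∈ A q, a i * evalPair ((W : ℝ)⁻¹ • ∑ q, f q) (x i)| ≤
        (W : ℝ)⁻¹ * (K * evalPair u y) := by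
    intro q
    rcases (A q).eq_empty_or_nonempty with he | ⟨i, hi⟩
    · exact ⟨0, Or.inl rfl, by simp [evalPair_zero_left], by simp [evalPair_zero_left, he]⟩
    · have hiH := ((hA q i).1 hi).1
      obtain ⟨s, hs, hsa⟩ := exists_sign (a i)
      have hev : evalPair (Finsupp.single (maxSupp (x i)) s) y = |a i| := by
        rw [evalPair_single_left, hy, D.tipVector_apply a (hHI hiH), hsa]
      refine ⟨_, Or.inr ⟨i, hi, s, hs, rfl⟩, by rw [hev]; exact abs_nonneg _, ?_⟩
      have hsing : A q = {i} :=
        Finset.eq_singleton_iff_unique_mem.2 ⟨hi, fun i' hi' => hAone q i' hi' i hi⟩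
      rw [hsing, Finset.sum_singleton, hev, abs_mul]
      calc |a i| * |evalPair ((W : ℝ)⁻¹ • ∑ q, f q) (x i)| ≤ |a i| * (C * (W : ℝ)⁻¹) := by
            gcongr
            exact hlen i hiH
        _ ≤ |a i| * (K * (W : ℝ)⁻¹) := by gcongr
        _ = (W : ℝ)⁻¹ * (K * |a i|) := by ring
  choose h g hh hg hgs hhg hh0 hg0 hest using hBq
  choose u hu hu0 huest using hAq
  have hhs : ∀ q, (h q).support ⊆ (B q).image fun i => maxSupp (x i) := by
    intro q
    rcases hh q with h0 | ⟨-, i, hi, s, -, hs⟩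
    · simp [h0]
    · rw [hs]
      exact Finsupp.support_single_subset.trans
        (Finset.singleton_subset_iff.2 (Finset.mem_image_of_mem _ hi))
  have hus : ∀ q, (u q).support ⊆ (A q).image fun i => maxSupp (x i) := by
    intro q
    rcases hu q with h0 | ⟨i, hi, s, -, hs⟩
    · simp [h0]
    · rw [hs]
      exact Finsupp.support_single_subset.trans
        (Finset.singleton_subset_iff.2 (Finset.mem_image_of_mem _ hi))
  let F : Fin d ×ₗ Fin 3 → c00 := fun t => ![h (ofLex t).1, g (ofLex t).1, u (ofLex t).1] (ofLex t).2
  let v : Fin d ×ₗ Fin 3 → ℕ∞ := fun t => ![⊤, w (ofLex t).1, ⊤] (ofLex t).2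
  have hFsum : ∑ t, F t = ∑ q, (h q + g q + u q) := by
    rw [← Equiv.sum_comp (toLex : Fin d × Fin 3 ≃ _), Fintype.sum_prod_type]
    refine Finset.sum_congr rfl fun q _ => ?_
    rw [Fin.sum_univ_three]
    rfl
  have hFs : ∀ q r, (F (toLex (q, r))).support ⊆ (A q ∪ B q).image fun i => maxSupp (x i) := by
    intro q r
    rw [Finset.image_union]
    fin_cases r
    · exact (hhs q).trans Finset.subset_union_right
    · exact (hgs q).trans Finset.subset_union_right
    · exact (hus q).trans Finset.subset_union_left
  have hlt_of : ∀ S S' : Finset ℕ, S ⊆ H → S' ⊆ H → (∀ i ∈ S, ∀ i' ∈ S', i < i') →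
      ∀ k ∈ S.image (fun i => maxSupp (x i)), ∀ k' ∈ S'.image (fun i => maxSupp (x i)),
        k < k' := by
    intro S S' hS hS' hlt k hk k' hk'
    obtain ⟨i, hi, rfl⟩ := Finset.mem_image.1 hk
    obtain ⟨i', hi', rfl⟩ := Finset.mem_image.1 hk'
    exact D.maxSupp_lt (hHI (hS hi)) (hHI (hS' hi')) (hlt i hi i' hi')
  refine ⟨(W : ℝ)⁻¹ • ∑ t, F t, WAux.op_triples hl js f hadm F v ?_ ?_ ?_ ?_, ?_, ?_, ?_⟩
  · intro t
    obtain ⟨⟨q, r⟩, rfl⟩ := toLex.surjective t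
    fin_cases r
    · rcases hh q with h0 | ⟨-, i, hi, s, hs, h1⟩
      · exact Or.inl h0
      · right
        change WAux P N (h q) ⊤
        rw [h1]
        exact WAux.unit _ s hs
    · exact hg q
    · rcases hu q with h0 | ⟨i, hi, s, hs, h1⟩
      · exact Or.inl h0
      · right
        change WAux P N (u q) ⊤
        rw [h1]
        exact WAux.unit _ s hs
  · intro s t hst k hk k' hk'
    obtain ⟨⟨q, r⟩, rfl⟩ := toLex.surjective s
    obtain ⟨⟨q', r'⟩, rfl⟩ := toLex.surjective t
    rcases Prod.Lex.toLex_lt_toLex.1 hst with hlt | ⟨heq, hlt⟩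
    · exact hlt_of _ _ (hEH q) (hEH q') (hElt q q' hlt) k (hFs q r hk) k' (hFs q' r' hk')
    · have heq : q = q' := heq
      have hlt : r < r' := hlt
      subst heq
      have hBH : B q ⊆ H := Finset.filter_subset _ _
      have hAH : A q ⊆ H := Finset.filter_subset _ _
      fin_cases r <;> fin_cases r' <;>
        first
        | (simp at hlt; done)
        | exact hhg q k hk k' hk'
        | exact hlt_of _ _ hBH hAH (hBA q) k (hhs q hk) k' (hus q hk')
        | exact hlt_of _ _ hBH hAH (hBA q) k (hgs q hk) k' (hus q hk')
  · intro t k hk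
    obtain ⟨⟨q, r⟩, rfl⟩ := toLex.surjective t
    obtain ⟨i, hi, rfl⟩ := Finset.mem_image.1 (hFs q r hk)
    obtain ⟨-, ⟨k, hk, hk'⟩, -⟩ := hE q i hi
    exact (minSupp_le hk').trans (le_maxSupp hk)
  · intro s t hst hs ht
    obtain ⟨⟨q, r⟩, rfl⟩ := toLex.surjective s
    obtain ⟨⟨q', r'⟩, rfl⟩ := toLex.surjective t
    rcases Prod.Lex.toLex_lt_toLex.1 hst with hlt | ⟨heq, hlt⟩
    · have hlt : q < q' := hlt
      obtain ⟨k, hk⟩ := Finsupp.support_nonempty_iff.2 hs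
      obtain ⟨i, hi, rfl⟩ := Finset.mem_image.1 (hFs q r hk)
      obtain ⟨hiH, ⟨k, hk, hk'⟩, -⟩ := hE q i hi
      have hN : N < maxSupp (f q) :=
        (D.N_lt_minSupp i (hHI hiH)).trans_le ((minSupp_le hk).trans (le_maxSupp hk'))
      have hw : (N : ℕ∞) < w q' := by
        -- Very fast growth only compares `f q'` with its predecessor `f p`.
        have hq'0 : 0 < (q' : ℕ) := lt_of_le_of_lt (Nat.zero_le _) hlt
        let p : Fin d := ⟨q' - 1, by omega⟩
        have hp : (maxSupp (f p) : ℕ∞) < w q' := hvfg p q' (by simp only [p]; omega)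
        have hqp : maxSupp (f q) ≤ maxSupp (f p) := by
          have hle : q ≤ p := by
            have : (q : ℕ) < q' := hlt
            exact Fin.le_def.2 (by simp only [p]; omega)
          rcases hle.lt_or_eq with h1 | h1
          · exact ((hadm.2.1 q p h1).lt (maxSupp_mem (hadm.1 q)) (maxSupp_mem (hadm.1 p))).le
          · rw [h1]
        refine lt_of_lt_of_le ?_ hp.le
        exact_mod_cast hN.trans_le hqp
      fin_cases r'
      · exact WithTop.coe_lt_top N
      · exact hw
      · exact WithTop.coe_lt_top N
    · have heq : q = q' := heq
      have hlt : r < r' := hlt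
      subst heq
      fin_cases r' <;> fin_cases r <;>
        first
        | (simp at hlt; done)
        | exact WithTop.coe_lt_top N
        | exact ((hh q).resolve_left hs).1
  · refine Finsupp.support_smul.trans (Finsupp.support_finsetSum.trans ?_)
    intro k hk
    obtain ⟨t, -, hk⟩ := Finset.mem_biUnion.1 hk
    obtain ⟨⟨q, r⟩, rfl⟩ := toLex.surjective t
    exact Finset.image_subset_image (hEH q) (hFs q r hk)
  · rw [evalPair_smul_left, hFsum, evalPair_sum_left]
    refine mul_nonneg (by positivity) (Finset.sum_nonneg fun q _ => ?_)
    rw [evalPair_add_left, evalPair_add_left]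
    exact add_nonneg (add_nonneg (hh0 q) (hg0 q)) (hu0 q)
  · have hsplit : ∑ i ∈ H, a i * evalPair ((W : ℝ)⁻¹ • ∑ q, f q) (x i) =
        ∑ q, ∑ i ∈ A q ∪ B q, a i * evalPair ((W : ℝ)⁻¹ • ∑ q, f q) (x i) := by
      rw [← Finset.sum_biUnion]
      · symm
        refine Finset.sum_subset (Finset.biUnion_subset.2 fun q _ => hEH q) fun i hi hnot => ?_
        have hno : ∀ q, ¬ meets i q := by
          by_contra hcon
          push Not at hcon
          obtain ⟨q₀, hq₀⟩ := hcon
          obtain ⟨q, hq, hqmin⟩ := (Finset.univ.filter fun q => meets i q).exists_minimal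
            ⟨q₀, Finset.mem_filter.2 ⟨Finset.mem_univ _, hq₀⟩⟩
          have hqm : meets i q := (Finset.mem_filter.1 hq).2
          have hfirst : ∀ r, meets i r → q ≤ r := fun r hr => by
            rcases le_total q r with h1 | h1
            · exact h1
            · exact hqmin (Finset.mem_filter.2 ⟨Finset.mem_univ _, hr⟩) h1
          refine hnot (Finset.mem_biUnion.2 ⟨q, Finset.mem_univ _, Finset.mem_union.2 ?_⟩)
          by_cases hex : ∃ r, q < r ∧ meets i r
          · exact Or.inl ((hA q i).2 ⟨hi, hqm, hfirst, hex⟩)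
          · refine Or.inr ((hB q i).2 ⟨hi, hqm, fun r hr => ?_⟩)
            by_contra hne
            exact hex ⟨r, lt_of_le_of_ne (hfirst r hr) (Ne.symm hne), hr⟩
        rw [evalPair_smul_left, evalPair_sum_left,
          Finset.sum_eq_zero fun q _ => hnomeet i q (hno q), mul_zero, mul_zero]
      · intro q _ r _ hqr
        refine Finset.disjoint_left.2 fun i hi hi' => ?_
        rcases lt_or_gt_of_ne hqr with h1 | h1
        · exact lt_irrefl i (hElt q r h1 i hi i hi')
        · exact lt_irrefl i (hElt r q h1 i hi' i hi)
    rw [hsplit, evalPair_smul_left, hFsum, evalPair_sum_left]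
    have hq : ∀ q, |∑ i ∈ A q ∪ B q, a i * evalPair ((W : ℝ)⁻¹ • ∑ q, f q) (x i)| ≤
        (W : ℝ)⁻¹ * (K * evalPair (h q + g q + u q) y) := by
      intro q
      have hBsum : ∑ i ∈ B q, a i * evalPair ((W : ℝ)⁻¹ • ∑ q, f q) (x i) =
          (W : ℝ)⁻¹ * ∑ i ∈ B q, a i * evalPair (f q) (x i) := by
        rw [Finset.mul_sum]
        refine Finset.sum_congr rfl fun i hi => ?_
        rw [evalPair_smul_left, evalPair_sum_left, Finset.sum_eq_single q]
        · ring
        · intro r _ hr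
          exact hnomeet i r fun hm => hr (((hB q i).1 hi).2.2 r hm)
        · simp
      rw [Finset.sum_union (hAB q), hBsum, evalPair_add_left, evalPair_add_left]
      refine (abs_add_le _ _).trans ?_
      rw [abs_mul (W : ℝ)⁻¹, abs_of_pos (inv_pos.2 hW0)]
      have h1 := mul_le_mul_of_nonneg_left (hest q) (inv_pos.2 hW0).le
      have h2 := huest q
      linarith
    calc |∑ q, ∑ i ∈ A q ∪ B q, a i * evalPair ((W : ℝ)⁻¹ • ∑ q, f q) (x i)|
        ≤ ∑ q, (W : ℝ)⁻¹ * (K * evalPair (h q + g q + u q) y) :=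
          (Finset.abs_sum_le_sum_abs _ _).trans (Finset.sum_le_sum fun q _ => hq q)
      _ = K * ((W : ℝ)⁻¹ * ∑ q, evalPair (h q + g q + u q) y) := by
          simp only [Finset.mul_sum]
          exact Finset.sum_congr rfl fun q _ => by ring

/-! ### The induction -/

theorem HeredRIS.basicIneq (D : HeredRIS P C M N I j x) (a : ℕ → ℝ) {f : c00} {w : ℕ∞}
    (hf : WIW P f w) : ∀ J ⊆ I, J.Nonempty → BasicIneq P C M N I x a f w J := by
  classical
  have hCK : C ≤ C * (1 + 1 / Real.sqrt M) := D.le_const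
  have hC0 : 0 ≤ C := by linarith [D.one_le]
  induction hf with
  | unit k s hs =>
    intro J hJI hJ
    -- `e_k^*` sees at most one of the vectors; `i` is its index, or arbitrary if there is none.
    obtain ⟨i, hi, hone⟩ : ∃ i ∈ J, ∀ b ∈ J, b ≠ i → x b k = 0 := by
      by_cases hk : ∃ i ∈ J, x i k ≠ 0
      · obtain ⟨i, hi, hik⟩ := hk
        refine ⟨i, hi, fun b hb hbi => ?_⟩
        by_contra hne
        have hbk : k ∈ (x b).support := Finsupp.mem_support_iff.2 hne
        have hik' : k ∈ (x i).support := Finsupp.mem_support_iff.2 hik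
        rcases lt_or_gt_of_ne hbi with h | h
        · exact lt_irrefl k ((D.blocks b (hJI hb) i (hJI hi) h).lt hbk hik')
        · exact lt_irrefl k ((D.blocks i (hJI hi) b (hJI hb) h).lt hik' hbk)
      · push Not at hk
        obtain ⟨i, hi⟩ := hJ
        exact ⟨i, hi, fun b hb _ => hk b hb⟩
    obtain ⟨σ, hσ, hσa⟩ := exists_sign (a i)
    have hev : evalPair (Finsupp.single (maxSupp (x i)) σ) (tipVector I x a) = |a i| := by
      rw [evalPair_single_left, D.tipVector_apply a (hJI hi), hσa]
    refine ⟨0, Finsupp.single (maxSupp (x i)) σ, Or.inl rfl, WAux.unit _ σ hσ, ?_, by simp,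
      by simp [evalPair_zero_left], by rw [hev]; exact abs_nonneg _, ?_⟩
    · exact Finsupp.support_single_subset.trans
        (Finset.singleton_subset_iff.2 (Finset.mem_image_of_mem _ hi))
    · rw [hev, evalPair_zero_left, zero_add, Finset.sum_eq_single i]
      · rw [abs_mul, mul_comm]
        have h1 := ((WIW.unit (P := P) k s hs).abs_evalPair_le (x i)).trans (D.norm_le i (hJI hi))
        exact mul_le_mul_of_nonneg_right (h1.trans hCK) (abs_nonneg _)
      · intro b hb hbi
        rw [evalPair_single_left, hone b hb hbi, mul_zero, mul_zero]
      · exact fun h => absurd hi h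
  | op l hl js d f w hf hadm hvfg ih =>
    intro J hJI hJ
    set W : ℕ := ∏ i, P.m (js i) with hWdef
    have hW1 : 1 ≤ W := one_le_weight P js
    have hW0 : (0 : ℝ) < W := by exact_mod_cast hW1
    have hWf : WIW P ((W : ℝ)⁻¹ • ∑ q, f q) (W : ℕ∞) := WIW.op l hl js d f w hf hadm hvfg
    let L := J.filter fun i => P.m (j i) ≤ W
    let H := J.filter fun i => ¬ P.m (j i) ≤ W
    have hLJ : L ⊆ J := Finset.filter_subset _ _
    have hHJ : H ⊆ J := Finset.filter_subset _ _
    obtain ⟨g, hg, hgs, hg0, hgest⟩ := D.high_part a hl js f w hf hadm hvfg ih (hHJ.trans hJI)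
      fun i hi => not_le.1 (Finset.mem_filter.1 hi).2
    have hgJ : g.support ⊆ J.image fun i => maxSupp (x i) :=
      hgs.trans (Finset.image_subset_image hHJ)
    have hsplit := Finset.sum_filter_add_sum_filter_not J (fun i => P.m (j i) ≤ W)
      (fun i => a i * evalPair ((W : ℝ)⁻¹ • ∑ q, f q) (x i))
    rcases L.eq_empty_or_nonempty with he | hne
    · refine ⟨0, g, Or.inl rfl, hg, hgJ, by simp, by simp [evalPair_zero_left], hg0, ?_⟩
      change ∑ i ∈ L, _ + ∑ i ∈ H, _ = _ at hsplit
      rw [← hsplit, he, Finset.sum_empty, zero_add, evalPair_zero_left, zero_add]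
      exact hgest
    · have hsmall : ∀ k, |((W : ℝ)⁻¹ • ∑ q, f q) k| ≤ (W : ℝ)⁻¹ := by
        intro k
        rw [Finsupp.smul_apply, smul_eq_mul, abs_mul, abs_of_pos (inv_pos.2 hW0)]
        exact mul_le_of_le_one_right (inv_pos.2 hW0).le
          (abs_sum_apply_le hadm.2.1 zero_le_one fun q => (hf q).abs_apply_le_one k)
      -- Members of `Schreier n`, `n ≥ 1`, do not contain `0`, so coordinate `0` is not charged.
      have hn : 0 < ∑ i, P.n (js i) := by
        refine Finset.sum_pos (fun i _ => ?_) ⟨⟨0, hl⟩, Finset.mem_univ _⟩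
        have h2 := P.n_mono.monotone (Nat.zero_le (js i))
        rw [P.n_first] at h2
        omega
      have hzero : ((W : ℝ)⁻¹ • ∑ q, f q) 0 = 0 := by
        rw [Finsupp.smul_apply, Finsupp.finsetSum_apply, Finset.sum_eq_zero, smul_zero]
        intro q _
        by_contra hne
        have h1 := minSupp_le (Finsupp.mem_support_iff.2 hne)
        have h2 := pos_of_mem_schreier hn hadm.2.2
          (Finset.mem_image_of_mem (fun q => minSupp (f q)) (Finset.mem_univ q))
        exact absurd h1 (not_le.2 h2)
      obtain ⟨i, hi, hest⟩ := D.low_part a hW1 hWf hsmall hzero (hLJ.trans hJI) hne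
        fun i hi => (Finset.mem_filter.1 hi).2
      have hiI := hJI (hLJ hi)
      obtain ⟨σ, hσ, hσa⟩ := exists_sign (a i)
      have hev : evalPair (Finsupp.single (maxSupp (x i)) σ) (tipVector I x a) = |a i| := by
        rw [evalPair_single_left, D.tipVector_apply a hiI, hσa]
      have hmi : P.m (j i) ≤ W := (Finset.mem_filter.1 hi).2
      refine ⟨Finsupp.single (maxSupp (x i)) σ, g, Or.inr ⟨?_, i, hLJ hi, σ, hσ, rfl⟩, hg, hgJ, ?_,
        by rw [hev]; exact abs_nonneg _, hg0, ?_⟩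
      · exact_mod_cast D.N_lt.trans_le ((D.M_le i hiI).trans hmi)
      · intro k hk k' hk'
        have hk := Finset.mem_singleton.1 (Finsupp.support_single_subset hk)
        obtain ⟨i', hi', rfl⟩ := Finset.mem_image.1 (hgs hk')
        have hi'I := hJI (hHJ hi')
        have hmi' : W < P.m (j i') := not_le.1 (Finset.mem_filter.1 hi').2
        rw [hk]
        refine D.maxSupp_lt hiI hi'I ?_
        by_contra hcon
        have hle : j i' ≤ j i := by
          rcases (not_lt.1 hcon).lt_or_eq with h | h
          · exact (D.j_lt i' hi'I i hiI h).le
          · rw [h]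
        have := P.m_mono.monotone hle
        omega
      · change ∑ i ∈ L, _ + ∑ i ∈ H, _ = _ at hsplit
        rw [← hsplit, hev, mul_add]
        exact (abs_add_le _ _).trans (add_le_add hest hgest)

end Induction

/-- **basic inequality.** Let `(x_i)_{i∈I}` be a `(C,(j_i))`-RIS, `(a_i)`
scalars, `i₀ = min I`, and `N < min {m_{j_{i₀}}, min supp x_{i₀}}`.  Then for every
`f ∈ W_iw` there are `h ∈ {± e_n^*} ∪ {0}` and `g ∈ W_aux^N` with `w(g) = w(f)`, both
supported in `{t_i = max supp x_i : i ∈ I}`, such that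
`|f(∑ a_i x_i)| ≤ C (1 + 1/√(m_{j_{i₀}})) |(h+g)(∑ a_i e_{t_i})|`. -/
theorem statement8 (P : IWParams) (C : ℝ) (hC : 1 ≤ C) (I : Finset ℕ) (hne : I.Nonempty)
    (j : ℕ → ℕ) (x : ℕ → c00) (hris : IsRIS P C I j x) (a : ℕ → ℝ) (N : ℕ)
    (hN1 : N < P.m (j (I.min' hne))) (hN2 : N < minSupp (x (I.min' hne)))
    (f : c00) (wf : ℕ∞) (hf : WIW P f wf) :
    ∃ (h g : c00) (wg : ℕ∞),
      (h = 0 ∨ ∃ nn : ℕ, (h = Finsupp.single nn (1 : ℝ) ∨ h = Finsupp.single nn (-1 : ℝ)) ∧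
        nn ∈ I.image fun i => maxSupp (x i)) ∧
      WAux P N g wg ∧ wg = wf ∧
      g.support ⊆ I.image (fun i => maxSupp (x i)) ∧
      |evalPair f (∑ i ∈ I, a i • x i)| ≤
        C * (1 + 1 / Real.sqrt (P.m (j (I.min' hne)))) *
          |evalPair (h + g) (∑ i ∈ I, a i • Finsupp.single (maxSupp (x i)) (1 : ℝ))| := by
  obtain ⟨hint, hj, hsne, hblk, hnorm, hfast, hwt⟩ := hris
  have hi₀ := I.min'_mem hne
  have hle : ∀ i ∈ I, I.min' hne ≤ i := fun i hi => I.min'_le i hi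
  have D : HeredRIS P C (P.m (j (I.min' hne))) N I j x :=
    { one_le := hC
      j_lt := hj
      ne := hsne
      blocks := hblk
      norm_le := hnorm
      fast := by
        intro a ha b hb hab
        -- Compare with the predecessor `b - 1`, which lies in the interval `I`.
        have hb1 : b - 1 ∈ I := hint a ha b hb (b - 1) (by omega) (by omega)
        refine lt_of_le_of_lt ?_ (hfast b hb (b - 1) hb1 (by omega))
        rcases (show a ≤ b - 1 by omega).lt_or_eq with h | h
        · exact_mod_cast ((hblk a ha (b - 1) hb1 h).lt (maxSupp_mem (hsne a ha))
            (maxSupp_mem (hsne _ hb1))).le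
        · rw [h]
      weight := hwt
      M_le := by
        intro i hi
        refine P.m_mono.monotone ?_
        rcases (hle i hi).lt_or_eq with h | h
        · exact (hj _ hi₀ i hi h).le
        · rw [← h]
      N_lt := hN1
      N_lt_minSupp := by
        intro i hi
        rcases (hle i hi).lt_or_eq with h | h
        · exact hN2.trans ((hblk _ hi₀ i hi h).lt (minSupp_mem (hsne _ hi₀))
            (minSupp_mem (hsne i hi)))
        · rw [← h]
          exact hN2 }
  obtain ⟨h, g, hh, hg, hgs, -, hh0, hg0, hest⟩ := D.basicIneq a hf I (Finset.Subset.refl I) hne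
  refine ⟨h, g, wf, ?_, hg, rfl, hgs, ?_⟩
  · rcases hh with h0 | ⟨-, i, hi, s, hs, hsh⟩
    · exact Or.inl h0
    · refine Or.inr ⟨maxSupp (x i), ?_, Finset.mem_image_of_mem _ hi⟩
      rcases hs with rfl | rfl
      · exact Or.inl hsh
      · exact Or.inr hsh
  · change _ ≤ _ * |evalPair (h + g) (tipVector I x a)|
    rw [evalPair_sum_smul_right, evalPair_add_left, abs_of_nonneg (add_nonneg hh0 hg0)]
    exact hest
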